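/- For every nonzero icosian p ∈ 𝕀, the set pLp̃ = {p x p̃ : x ∈ L} is a similar sublattice of L; that is, pLp̃ ⊆ L and there exists a rotation R ∈ SO(4,ℝ) of ℍ ≅ ℝ⁴ such that pLp̃ = |p p̃| · R(L). -/

import Mathlib

/-! The map `x ↦ x̃` is an involutive anti-automorphism of `ℍ(K)`: Galois conjugation acts as a
ring automorphism on coordinates, and swapping `j` with `k` reverses products. The icosians form
a ring which is stable under the twist (`twist_icosian`: `ṽ₄ = v₃ - v₄`, the other generators being
fixed), and the lattice `L` is exactly the set of icosians fixed by the twist (`mem_Lsub_iff`).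
Hence for `x ∈ L` the icosian `p x p̃` satisfies `(p x p̃)~ = p x̃ p̃ = p x p̃`, so it lies in `L`.

For the rotation take `R x = |p p̃|⁻¹ • p x p̃`, where `p̃ ≠ 0` because the twist is involutive.
It is an isometry because the norm is multiplicative. Left and right multiplication by `q` have
determinant `|q|⁴` (`det_mulLeft`, `det_mulRight`), so `det R = |p p̃|⁻⁴ |p|⁴ |p̃|⁴ = 1`. -/

noncomputable section

open Quaternion

/-- Hamilton's quaternion algebra over `ℝ`. -/
abbrev HR := Quaternion ℝ

/-- the golden ratio `τ = (1+√5)/2`. -/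
def tau : ℝ := (1 + Real.sqrt 5) / 2

/-- membership in the quadratic field `K = ℚ(√5)`, viewed inside `ℝ`. -/
def inK (x : ℝ) : Prop := ∃ q r : ℚ, x = (q : ℝ) + (r : ℝ) * Real.sqrt 5

/-- membership in the ring of integers `𝔬 = ℤ[τ]` of `K`, viewed inside `ℝ`. -/
def inO (x : ℝ) : Prop := ∃ m n : ℤ, x = (m : ℝ) + (n : ℝ) * tau

/-- membership in `ℍ(K)`: all four components lie in `K`. -/
def inHK (q : HR) : Prop := inK q.re ∧ inK q.imI ∧ inK q.imJ ∧ inK q.imK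

open scoped Classical in
/-- Galois conjugation `′` on `K = ℚ(√5)`, sending `q + r√5` to `q - r√5`
(extended by the identity off `K`; on `K` this is the usual Galois conjugation,
since the representation `x = q + r√5` with `q, r ∈ ℚ` is unique). -/
noncomputable def gal (x : ℝ) : ℝ :=
  if h : ∃ q r : ℚ, x = (q : ℝ) + (r : ℝ) * Real.sqrt 5 then
    ((h.choose : ℝ) - (h.choose_spec.choose : ℝ) * Real.sqrt 5)
  else x

/-- the twist map `q = (a,b,c,d) ↦ q̃ = (a′,b′,d′,c′)` on `ℍ(K)`. -/
def twist (q : HR) : HR := ⟨gal q.re, gal q.imI, gal q.imK, gal q.imJ⟩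

def v₁ : HR := ⟨1, 0, 0, 0⟩
def v₂ : HR := ⟨0, 1, 0, 0⟩
def v₃ : HR := ⟨1/2, 1/2, 1/2, 1/2⟩
def v₄ : HR := ⟨(1 - tau)/2, tau/2, 0, 1/2⟩

/-- membership in the icosian ring `𝕀`: the `𝔬`-span of
`(1,0,0,0)`, `(0,1,0,0)`, `½(1,1,1,1)`, `½(1−τ,τ,0,1)`. -/
def inIcosian (q : HR) : Prop :=
  ∃ a b c d : ℝ, inO a ∧ inO b ∧ inO c ∧ inO d ∧
    q = a • v₁ + b • v₂ + c • v₃ + d • v₄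

def w₁ : HR := ⟨1, 0, 0, 0⟩
def w₂ : HR := ⟨-(1/2), 1/2, 1/2, 1/2⟩
def w₃ : HR := ⟨0, -1, 0, 0⟩
def w₄ : HR := ⟨0, 1/2, (tau - 1)/2, -(tau/2)⟩

/-- the lattice `L` (a copy of the root lattice `A₄`): the `ℤ`-span of
`(1,0,0,0)`, `½(−1,1,1,1)`, `(0,−1,0,0)`, `½(0,1,τ−1,−τ)`. -/
def Lsub : AddSubgroup HR :=
  (Submodule.span ℤ ({w₁, w₂, w₃, w₄} : Set HR)).toAddSubgroup

/-- `Λ` is a similar sublattice (SSL) of `L`: `Λ = α R(L) ⊆ L` for some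
`α > 0` and a linear isometry `R` of `ℍ ≅ ℝ⁴`. -/
def IsSSL (Λ : AddSubgroup HR) : Prop :=
  ∃ (α : ℝ) (R : HR ≃ₗᵢ[ℝ] HR), 0 < α ∧
    (Λ : Set HR) = (fun x => α • R x) '' (Lsub : Set HR) ∧ Λ ≤ Lsub

/-- `p` is an `𝕀`-primitive icosian: `p ∈ 𝕀` and whenever `α ∈ K` with
`α p ∈ 𝕀`, one has `α ∈ 𝔬`. -/
def IPrimitive (p : HR) : Prop :=
  inIcosian p ∧ ∀ α : ℝ, inK α → inIcosian (α • p) → inO α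

/-- an icosian `q` is admissible when `|q q̃|` is a rational integer. -/
def Admissible (q : HR) : Prop := ∃ n : ℤ, ‖q * twist q‖ = (n : ℝ)

lemma inO_add {x y : ℝ} (hx : inO x) (hy : inO y) : inO (x + y) := by
  obtain ⟨m, n, rfl⟩ := hx; obtain ⟨m', n', rfl⟩ := hy
  exact ⟨m + m', n + n', by push_cast; ring⟩

lemma inO_neg {x : ℝ} (hx : inO x) : inO (-x) := by
  obtain ⟨m, n, rfl⟩ := hx
  exact ⟨-m, -n, by push_cast; ring⟩

/-- the icosian ring `𝕀` as an additive subgroup of `ℍ`. -/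
def Isub : AddSubgroup HR where
  carrier := {q | inIcosian q}
  zero_mem' := ⟨0, 0, 0, 0, ⟨0, 0, by push_cast; ring⟩, ⟨0, 0, by push_cast; ring⟩,
    ⟨0, 0, by push_cast; ring⟩, ⟨0, 0, by push_cast; ring⟩, by simp⟩
  add_mem' := by
    rintro x y ⟨a, b, c, d, ha, hb, hc, hd, rfl⟩ ⟨a', b', c', d', ha', hb', hc', hd', rfl⟩
    exact ⟨a + a', b + b', c + c', d + d', inO_add ha ha', inO_add hb hb',
      inO_add hc hc', inO_add hd hd', by simp [add_smul]; abel⟩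
  neg_mem' := by
    rintro x ⟨a, b, c, d, ha, hb, hc, hd, rfl⟩
    exact ⟨-a, -b, -c, -d, inO_neg ha, inO_neg hb, inO_neg hc, inO_neg hd,
      by simp [neg_smul]; abel⟩

/-- the additive map `x ↦ p x p̃`. -/
def conjHom (p : HR) : HR →+ HR :=
  AddMonoidHom.mk' (fun x => p * x * twist p) (fun a b => by simp [mul_add, add_mul])

/-- the additive map `x ↦ (1/|q q̃|) · q x q̃`. -/
def cslHom (q : HR) : HR →+ HR :=
  AddMonoidHom.mk' (fun x => (1 / ‖q * twist q‖) • (q * x * twist q))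
    (fun a b => by simp [mul_add, add_mul, smul_add])

/-- the subgroup `L ∩ (1/|q q̃|) · q L q̃` of `ℍ`. -/
def cslSub (q : HR) : AddSubgroup HR := Lsub ⊓ Lsub.map (cslHom q)

/-- for a rotation `R`, the subgroup `Γ ∩ R(Γ)`. -/
def cslOf (Γ : AddSubgroup HR) (R : HR ≃ₗᵢ[ℝ] HR) : AddSubgroup HR :=
  Γ ⊓ Γ.map R.toLinearEquiv.toLinearMap.toAddMonoidHom

/-- the standard Euclidean inner product on `ℍ ≅ ℝ⁴`. -/
def dot (x y : HR) : ℝ := x.re * y.re + x.imI * y.imI + x.imJ * y.imJ + x.imK * y.imK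

/-- the dual lattice `L* = {x ∈ ℍ : ⟨x|y⟩ ∈ ℤ for all y ∈ L}`. -/
def Ldual : AddSubgroup HR where
  carrier := {x | ∀ y ∈ Lsub, ∃ n : ℤ, dot x y = n}
  zero_mem' := by intro y _; exact ⟨0, by simp [dot]⟩
  add_mem' := by
    intro a b ha hb y hy
    obtain ⟨m, hm⟩ := ha y hy; obtain ⟨n, hn⟩ := hb y hy
    refine ⟨m + n, ?_⟩
    have : dot (a + b) y = dot a y + dot b y := by simp [dot]; ring
    rw [this, hm, hn]; push_cast; ring
  neg_mem' := by
    intro a ha y hy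
    obtain ⟨m, hm⟩ := ha y hy
    refine ⟨-m, ?_⟩
    have : dot (-a) y = -dot a y := by simp [dot]; ring
    rw [this, hm]; push_cast; ring

/-! ### Galois conjugation on `ℚ(√5)` -/

lemma sqrt5_sq : Real.sqrt 5 * Real.sqrt 5 = 5 := Real.mul_self_sqrt (by norm_num)

lemma tau_sq : tau * tau = tau + 1 := by
  unfold tau; linear_combination sqrt5_sq / 4

lemma sqrt5_eq : Real.sqrt 5 = 2 * tau - 1 := by unfold tau; ring

lemma irr_sqrt5 : Irrational (Real.sqrt 5) := by
  simpa using (show Nat.Prime 5 by norm_num).irrational_sqrt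

lemma sqrt5_unique {q r q' r' : ℚ}
    (h : (q : ℝ) + r * Real.sqrt 5 = q' + r' * Real.sqrt 5) : q = q' ∧ r = r' := by
  have hr : r = r' := by
    by_contra hne
    have hne' : ((r - r' : ℚ) : ℝ) ≠ 0 := by exact_mod_cast sub_ne_zero.mpr hne
    apply irr_sqrt5
    refine ⟨(q' - q) / (r - r'), ?_⟩
    rw [Rat.cast_div, div_eq_iff hne']
    push_cast
    linear_combination -h
  subst hr
  exact ⟨by exact_mod_cast add_right_cancel h, rfl⟩

/-- The value of `gal` does not depend on the representation chosen in its definition. -/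
lemma gal_eq (q r : ℚ) : gal ((q : ℝ) + r * Real.sqrt 5) = q - r * Real.sqrt 5 := by
  have h : ∃ q' r' : ℚ, (q : ℝ) + r * Real.sqrt 5 = q' + r' * Real.sqrt 5 := ⟨q, r, rfl⟩
  unfold gal
  rw [dif_pos h]
  have h1 := (sqrt5_unique h.choose_spec.choose_spec).1
  have h2 := (sqrt5_unique h.choose_spec.choose_spec).2
  exact congrArg₂ (fun s t : ℚ => (s : ℝ) - t * Real.sqrt 5) h1.symm h2.symm

lemma inK_add {x y : ℝ} (hx : inK x) (hy : inK y) : inK (x + y) := by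
  obtain ⟨q, r, rfl⟩ := hx; obtain ⟨q', r', rfl⟩ := hy
  exact ⟨q + q', r + r', by push_cast; ring⟩

lemma inK_neg {x : ℝ} (hx : inK x) : inK (-x) := by
  obtain ⟨q, r, rfl⟩ := hx
  exact ⟨-q, -r, by push_cast; ring⟩

lemma inK_sub {x y : ℝ} (hx : inK x) (hy : inK y) : inK (x - y) :=
  sub_eq_add_neg x y ▸ inK_add hx (inK_neg hy)

lemma inK_mul {x y : ℝ} (hx : inK x) (hy : inK y) : inK (x * y) := by
  obtain ⟨q, r, rfl⟩ := hx; obtain ⟨q', r', rfl⟩ := hy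
  exact ⟨q * q' + 5 * r * r', q * r' + r * q', by
    push_cast; linear_combination (r : ℝ) * r' * sqrt5_sq⟩

lemma gal_add {x y : ℝ} (hx : inK x) (hy : inK y) : gal (x + y) = gal x + gal y := by
  obtain ⟨q, r, rfl⟩ := hx; obtain ⟨q', r', rfl⟩ := hy
  rw [gal_eq, gal_eq, show (q : ℝ) + r * Real.sqrt 5 + (q' + r' * Real.sqrt 5) =
    ((q + q' : ℚ) : ℝ) + ((r + r' : ℚ) : ℝ) * Real.sqrt 5 by push_cast; ring, gal_eq]
  push_cast; ring

lemma gal_neg {x : ℝ} (hx : inK x) : gal (-x) = -gal x := by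
  obtain ⟨q, r, rfl⟩ := hx
  rw [gal_eq, show -((q : ℝ) + r * Real.sqrt 5) =
    ((-q : ℚ) : ℝ) + ((-r : ℚ) : ℝ) * Real.sqrt 5 by push_cast; ring, gal_eq]
  push_cast; ring

lemma gal_sub {x y : ℝ} (hx : inK x) (hy : inK y) : gal (x - y) = gal x - gal y := by
  rw [sub_eq_add_neg, gal_add hx (inK_neg hy), gal_neg hy, sub_eq_add_neg]

lemma gal_mul {x y : ℝ} (hx : inK x) (hy : inK y) : gal (x * y) = gal x * gal y := by
  obtain ⟨q, r, rfl⟩ := hx; obtain ⟨q', r', rfl⟩ := hy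
  rw [gal_eq, gal_eq, show ((q : ℝ) + r * Real.sqrt 5) * (q' + r' * Real.sqrt 5) =
    ((q * q' + 5 * r * r' : ℚ) : ℝ) + ((q * r' + r * q' : ℚ) : ℝ) * Real.sqrt 5 by
      push_cast; linear_combination (r : ℝ) * r' * sqrt5_sq, gal_eq]
  push_cast
  linear_combination -(r : ℝ) * r' * sqrt5_sq

lemma inK_gal {x : ℝ} (hx : inK x) : inK (gal x) := by
  obtain ⟨q, r, rfl⟩ := hx
  exact ⟨q, -r, by rw [gal_eq]; push_cast; ring⟩

lemma gal_gal {x : ℝ} (hx : inK x) : gal (gal x) = x := by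
  obtain ⟨q, r, rfl⟩ := hx
  rw [gal_eq, show (q : ℝ) - r * Real.sqrt 5 = q + ((-r : ℚ) : ℝ) * Real.sqrt 5 by
    push_cast; ring, gal_eq]
  push_cast; ring

lemma inK_rat (q : ℚ) : inK (q : ℝ) := ⟨q, 0, by simp⟩

lemma gal_rat (q : ℚ) : gal (q : ℝ) = q := by simpa using gal_eq q 0

lemma inK_zero : inK 0 := by simpa using inK_rat 0

lemma inK_one : inK 1 := by simpa using inK_rat 1

lemma inK_half : inK (1 / 2) := by simpa using inK_rat (1 / 2)

lemma gal_zero : gal 0 = 0 := by simpa using gal_rat 0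

lemma gal_one : gal 1 = 1 := by simpa using gal_rat 1

lemma gal_half : gal (1 / 2) = 1 / 2 := by simpa using gal_rat (1 / 2)

lemma inO.inK {x : ℝ} (hx : inO x) : inK x := by
  obtain ⟨m, n, rfl⟩ := hx
  exact ⟨m + n / 2, n / 2, by rw [sqrt5_eq]; push_cast; ring⟩

lemma gal_int_tau (m n : ℤ) : gal ((m : ℝ) + n * tau) = m + n * (1 - tau) := by
  rw [show (m : ℝ) + n * tau = ((m + n / 2 : ℚ) : ℝ) + ((n / 2 : ℚ) : ℝ) * Real.sqrt 5 by
    rw [sqrt5_eq]; push_cast; ring, gal_eq, sqrt5_eq]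
  push_cast; ring

lemma inO_gal {x : ℝ} (hx : inO x) : inO (gal x) := by
  obtain ⟨m, n, rfl⟩ := hx
  exact ⟨m + n, -n, by rw [gal_int_tau]; push_cast; ring⟩

lemma inO_mul {x y : ℝ} (hx : inO x) (hy : inO y) : inO (x * y) := by
  obtain ⟨m, n, rfl⟩ := hx; obtain ⟨m', n', rfl⟩ := hy
  exact ⟨m * m' + n * n', m * n' + n * m' + n * n', by
    push_cast; linear_combination (n : ℝ) * n' * tau_sq⟩

lemma inO_int (m : ℤ) : inO (m : ℝ) := ⟨m, 0, by simp⟩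

lemma inO_zero : inO 0 := by simpa using inO_int 0

lemma inO_one : inO 1 := by simpa using inO_int 1

lemma inO_tau : inO tau := ⟨0, 1, by simp⟩

lemma gal_tau : gal tau = 1 - tau := by simpa using gal_int_tau 0 1

/-! ### The twist map -/

@[simp] lemma twist_re (x : HR) : (twist x).re = gal x.re := rfl

@[simp] lemma twist_imI (x : HR) : (twist x).imI = gal x.imI := rfl

@[simp] lemma twist_imJ (x : HR) : (twist x).imJ = gal x.imK := rfl

@[simp] lemma twist_imK (x : HR) : (twist x).imK = gal x.imJ := rfl

lemma inHK_add {x y : HR} (hx : inHK x) (hy : inHK y) : inHK (x + y) :=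
  ⟨inK_add hx.1 hy.1, inK_add hx.2.1 hy.2.1, inK_add hx.2.2.1 hy.2.2.1,
    inK_add hx.2.2.2 hy.2.2.2⟩

lemma inHK_smul {a : ℝ} {x : HR} (ha : inK a) (hx : inHK x) : inHK (a • x) :=
  ⟨inK_mul ha hx.1, inK_mul ha hx.2.1, inK_mul ha hx.2.2.1, inK_mul ha hx.2.2.2⟩

lemma inHK_mul {x y : HR} (hx : inHK x) (hy : inHK y) : inHK (x * y) := by
  obtain ⟨h1, h2, h3, h4⟩ := hx
  obtain ⟨k1, k2, k3, k4⟩ := hy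
  refine ⟨?_, ?_, ?_, ?_⟩ <;>
    simp only [Quaternion.re_mul, Quaternion.imI_mul, Quaternion.imJ_mul, Quaternion.imK_mul] <;>
    repeat' first | assumption | apply inK_add | apply inK_sub | apply inK_mul | apply inK_neg

lemma inHK_twist {x : HR} (hx : inHK x) : inHK (twist x) :=
  ⟨inK_gal hx.1, inK_gal hx.2.1, inK_gal hx.2.2.2, inK_gal hx.2.2.1⟩

lemma twist_twist {x : HR} (hx : inHK x) : twist (twist x) = x := by
  ext <;> simp [gal_gal, hx.1, hx.2.1, hx.2.2.1, hx.2.2.2]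

lemma twist_add {x y : HR} (hx : inHK x) (hy : inHK y) :
    twist (x + y) = twist x + twist y := by
  ext
  · exact gal_add hx.1 hy.1
  · exact gal_add hx.2.1 hy.2.1
  · exact gal_add hx.2.2.2 hy.2.2.2
  · exact gal_add hx.2.2.1 hy.2.2.1

lemma twist_smul {a : ℝ} {x : HR} (ha : inK a) (hx : inHK x) :
    twist (a • x) = gal a • twist x := by
  ext
  · exact gal_mul ha hx.1
  · exact gal_mul ha hx.2.1
  · exact gal_mul ha hx.2.2.2
  · exact gal_mul ha hx.2.2.1

/-- The twist reverses products, because `i ↦ i`, `j ↦ k`, `k ↦ j` does. -/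
lemma twist_mul {x y : HR} (hx : inHK x) (hy : inHK y) :
    twist (x * y) = twist y * twist x := by
  obtain ⟨h1, h2, h3, h4⟩ := hx
  obtain ⟨k1, k2, k3, k4⟩ := hy
  ext <;>
    simp (discharger := repeat' first | assumption | apply inK_add | apply inK_sub | apply inK_mul)
      only [twist_re, twist_imI, twist_imJ, twist_imK, Quaternion.re_mul, Quaternion.imI_mul, Quaternion.imJ_mul,
        Quaternion.imK_mul, gal_add, gal_sub, gal_mul] <;>
    ring

/-! ### The icosian ring -/

@[simp] lemma v₁_re : v₁.re = 1 := rfl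

@[simp] lemma v₁_imI : v₁.imI = 0 := rfl

@[simp] lemma v₁_imJ : v₁.imJ = 0 := rfl

@[simp] lemma v₁_imK : v₁.imK = 0 := rfl

@[simp] lemma v₂_re : v₂.re = 0 := rfl

@[simp] lemma v₂_imI : v₂.imI = 1 := rfl

@[simp] lemma v₂_imJ : v₂.imJ = 0 := rfl

@[simp] lemma v₂_imK : v₂.imK = 0 := rfl

@[simp] lemma v₃_re : v₃.re = 1 / 2 := rfl

@[simp] lemma v₃_imI : v₃.imI = 1 / 2 := rfl

@[simp] lemma v₃_imJ : v₃.imJ = 1 / 2 := rfl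

@[simp] lemma v₃_imK : v₃.imK = 1 / 2 := rfl

@[simp] lemma v₄_re : v₄.re = (1 - tau) / 2 := rfl

@[simp] lemma v₄_imI : v₄.imI = tau / 2 := rfl

@[simp] lemma v₄_imJ : v₄.imJ = 0 := rfl

@[simp] lemma v₄_imK : v₄.imK = 1 / 2 := rfl

lemma inHK_v₁ : inHK v₁ := ⟨inK_one, inK_zero, inK_zero, inK_zero⟩

lemma inHK_v₂ : inHK v₂ := ⟨inK_zero, inK_one, inK_zero, inK_zero⟩

lemma inHK_v₃ : inHK v₃ := ⟨inK_half, inK_half, inK_half, inK_half⟩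

lemma inHK_v₄ : inHK v₄ := by
  refine ⟨?_, ?_, inK_zero, inK_half⟩
  · simpa [v₄, div_eq_mul_inv] using inK_mul (inK_sub inK_one inO_tau.inK) inK_half
  · simpa [v₄, div_eq_mul_inv] using inK_mul inO_tau.inK inK_half

lemma twist_v₁ : twist v₁ = v₁ := by ext <;> simp [gal_one, gal_zero]

lemma twist_v₂ : twist v₂ = v₂ := by ext <;> simp [gal_one, gal_zero]

lemma twist_v₃ : twist v₃ = v₃ := by ext <;> simp [-one_div, gal_half]

lemma twist_v₄ : twist v₄ = v₃ - v₄ := by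
  have h1 : gal ((1 - tau) / 2) = tau / 2 := by
    rw [div_eq_mul_one_div, gal_mul (inK_sub inK_one inO_tau.inK) inK_half,
      gal_sub inK_one inO_tau.inK, gal_one, gal_tau, gal_half]
    ring
  have h2 : gal (tau / 2) = (1 - tau) / 2 := by
    rw [div_eq_mul_one_div, gal_mul inO_tau.inK inK_half, gal_tau, gal_half]
    ring
  ext <;> simp [h1, h2, gal_zero, -one_div, gal_half] <;> ring

lemma inIcosian.inHK {x : HR} (hx : inIcosian x) : inHK x := by
  obtain ⟨a, b, c, d, ha, hb, hc, hd, rfl⟩ := hx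
  exact inHK_add (inHK_add (inHK_add (inHK_smul ha.inK inHK_v₁) (inHK_smul hb.inK inHK_v₂))
    (inHK_smul hc.inK inHK_v₃)) (inHK_smul hd.inK inHK_v₄)

lemma twist_comb {a b c d : ℝ} (ha : inK a) (hb : inK b) (hc : inK c) (hd : inK d) :
    twist (a • v₁ + b • v₂ + c • v₃ + d • v₄) =
      gal a • v₁ + gal b • v₂ + (gal c + gal d) • v₃ + (-gal d) • v₄ := by
  have h1 := inHK_smul ha inHK_v₁
  have h2 := inHK_smul hb inHK_v₂
  have h3 := inHK_smul hc inHK_v₃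
  have h4 := inHK_smul hd inHK_v₄
  rw [twist_add (inHK_add (inHK_add h1 h2) h3) h4, twist_add (inHK_add h1 h2) h3,
    twist_add h1 h2, twist_smul ha inHK_v₁, twist_smul hb inHK_v₂, twist_smul hc inHK_v₃,
    twist_smul hd inHK_v₄, twist_v₁, twist_v₂, twist_v₃, twist_v₄]
  module

lemma twist_icosian {x : HR} (hx : inIcosian x) : inIcosian (twist x) := by
  obtain ⟨a, b, c, d, ha, hb, hc, hd, rfl⟩ := hx
  exact ⟨_, _, _, _, inO_gal ha, inO_gal hb, inO_add (inO_gal hc) (inO_gal hd),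
    inO_neg (inO_gal hd), twist_comb ha.inK hb.inK hc.inK hd.inK⟩

/-- The icosians are closed under multiplication. The coefficients of the product come from
expanding with the multiplication table of `v₁, v₂, v₃, v₄` over `𝔬`. -/
lemma icosian_mul {x y : HR} (hx : inIcosian x) (hy : inIcosian y) : inIcosian (x * y) := by
  obtain ⟨a, b, c, d, ha, hb, hc, hd, rfl⟩ := hx
  obtain ⟨a', b', c', d', ha', hb', hc', hd', rfl⟩ := hy
  have ht : inO (1 + -tau) := inO_add inO_one (inO_neg inO_tau)
  have h2 : inO 2 := by simpa using inO_int 2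
  have htau := inO_tau
  refine ⟨a * a' + -(b * b') + -(b * c' * (1 + -tau)) + -(tau * (c * b')) + -(c * c') + -(c * d')
      + -(tau * (d * b')) + -(d * d'),
    a * b' + b * a' + b * c' * (1 + -tau) + b * d' * (1 + -tau) + tau * (c * b') + c * d'
      + -(d * c'),
    a * c' + -(b * c') + -(b * d') + c * a' + c * b' + c * c' + d * b' + d * c' * (1 + -tau),
    a * d' + 2 * (b * c') + b * d' + c * d' * (1 + -tau) + -(2 * (c * b')) + d * a' + -(d * b')
      + tau * (d * c') + d * d' * (1 + -tau), ?_, ?_, ?_, ?_, ?_⟩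
  iterate 4
    · repeat' first | assumption | apply inO_add | apply inO_mul | apply inO_neg
  ext
  · simp
    linear_combination -(c * d' - d * c' + d * d') / 2 * tau_sq
  · simp
    linear_combination (c * d' - d * c') / 2 * tau_sq
  · simp
    ring
  · simp
    ring

/-! ### The lattice `L` as the twist-fixed icosians -/

@[simp] lemma w₂_re : w₂.re = -(1 / 2) := rfl

@[simp] lemma w₂_imI : w₂.imI = 1 / 2 := rfl

@[simp] lemma w₂_imJ : w₂.imJ = 1 / 2 := rfl

@[simp] lemma w₂_imK : w₂.imK = 1 / 2 := rfl

@[simp] lemma w₄_re : w₄.re = 0 := rfl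

@[simp] lemma w₄_imI : w₄.imI = 1 / 2 := rfl

@[simp] lemma w₄_imJ : w₄.imJ = (tau - 1) / 2 := rfl

@[simp] lemma w₄_imK : w₄.imK = -(tau / 2) := rfl

lemma w₁_eq : w₁ = v₁ := rfl

lemma w₂_eq : w₂ = -v₁ + v₃ := by
  ext <;> simp; norm_num

lemma w₃_eq : w₃ = -v₂ := by
  ext <;> simp [w₃]

lemma w₄_eq : w₄ = -v₁ + (2 : ℝ) • v₂ + (tau - 1) • v₃ + (1 - 2 * tau) • v₄ := by
  ext
  · simp
    linear_combination -tau_sq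
  · simp
    linear_combination tau_sq
  · simp
    ring
  · simp
    ring

lemma mem_Lsub {x : HR} : x ∈ Lsub ↔
    ∃ k l m n : ℤ, x = (k : ℝ) • w₁ + (l : ℝ) • w₂ + (m : ℝ) • w₃ + (n : ℝ) • w₄ := by
  simp only [Lsub, Submodule.mem_toAddSubgroup, Submodule.mem_span_insert,
    Submodule.mem_span_singleton, Int.cast_smul_eq_zsmul]
  constructor
  · rintro ⟨k, _, ⟨l, _, ⟨m, _, ⟨n, rfl⟩, rfl⟩, rfl⟩, rfl⟩
    exact ⟨k, l, m, n, by abel⟩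
  · rintro ⟨k, l, m, n, rfl⟩
    exact ⟨k, _, ⟨l, _, ⟨m, _, ⟨n, rfl⟩, rfl⟩, rfl⟩, by abel⟩

lemma one_sub_two_tau_ne : 1 - 2 * tau ≠ 0 := by
  have h : 1 - 2 * tau = -Real.sqrt 5 := by rw [sqrt5_eq]; ring
  rw [h]
  exact neg_ne_zero.mpr irr_sqrt5.ne_zero

/-- `L` is the set of icosians fixed by the twist. -/
lemma mem_Lsub_iff {x : HR} : x ∈ Lsub ↔ inIcosian x ∧ twist x = x := by
  rw [mem_Lsub]
  constructor
  · rintro ⟨k, l, m, n, rfl⟩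
    -- The coordinates of `k w₁ + l w₂ + m w₃ + n w₄` in the basis `v₁, v₂, v₃, v₄`.
    have e : (k : ℝ) • w₁ + (l : ℝ) • w₂ + (m : ℝ) • w₃ + (n : ℝ) • w₄ =
        (((k - l - n : ℤ) : ℝ) + ((0 : ℤ) : ℝ) * tau) • v₁
        + (((2 * n - m : ℤ) : ℝ) + ((0 : ℤ) : ℝ) * tau) • v₂
        + (((l - n : ℤ) : ℝ) + (n : ℝ) * tau) • v₃
        + ((n : ℝ) + ((-2 * n : ℤ) : ℝ) * tau) • v₄ := by
      rw [w₁_eq, w₂_eq, w₃_eq, w₄_eq]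
      push_cast
      module
    rw [e]
    refine ⟨⟨_, _, _, _, ⟨_, _, rfl⟩, ⟨_, _, rfl⟩, ⟨_, _, rfl⟩, ⟨_, _, rfl⟩, rfl⟩, ?_⟩
    rw [twist_comb (inO.inK ⟨_, _, rfl⟩) (inO.inK ⟨_, _, rfl⟩) (inO.inK ⟨_, _, rfl⟩)
      (inO.inK ⟨_, _, rfl⟩)]
    simp only [gal_int_tau]
    push_cast
    module
  · rintro ⟨⟨_, _, _, _, ⟨m₁, n₁, rfl⟩, ⟨m₂, n₂, rfl⟩, ⟨m₃, n₃, rfl⟩, ⟨m₄, n₄, rfl⟩, rfl⟩, h⟩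
    rw [twist_comb (inO.inK ⟨_, _, rfl⟩) (inO.inK ⟨_, _, rfl⟩) (inO.inK ⟨_, _, rfl⟩)
      (inO.inK ⟨_, _, rfl⟩)] at h
    simp only [gal_int_tau] at h
    have hre := congrArg (fun q : HR => q.re) h
    have hi := congrArg (fun q : HR => q.imI) h
    have hj := congrArg (fun q : HR => q.imJ) h
    have hk := congrArg (fun q : HR => q.imK) h
    simp at hre hi hj hk
    have hs := one_sub_two_tau_ne
    -- The `j` and `k` components force `d` to be negated by conjugation and then determine it
    -- from `c`. Then `a` and `b` are fixed by conjugation, hence rational integers.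
    have hd : (2 * m₄ + n₄ : ℝ) = 0 := by linear_combination hj - 2 * hk
    have hn₄ : (n₄ : ℝ) = -2 * m₄ := by linear_combination hd
    rw [hn₄] at hre hi hj
    have hn₃ : (m₄ : ℝ) = n₃ := by
      apply mul_right_cancel₀ hs
      linear_combination -hj
    rw [hn₃] at hre hi hj
    have hn₁ : (n₁ : ℝ) = 0 := by
      apply mul_right_cancel₀ hs
      linear_combination hre - hj / 2
    have hn₂ : (n₂ : ℝ) = 0 := by
      apply mul_right_cancel₀ hs
      linear_combination hi - hj / 2
    refine ⟨m₁ + m₃ + 2 * n₃, m₃ + n₃, 2 * n₃ - m₂, n₃, ?_⟩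
    rw [hn₁, hn₂, hn₄, hn₃, w₁_eq, w₂_eq, w₃_eq, w₄_eq]
    push_cast
    module

/-! ### Determinants of quaternion multiplications -/

/-- The basis `1, i, j, k` of `ℍ`. -/
def quatBasis : Module.Basis (Fin 4) ℝ HR := QuaternionAlgebra.basisOneIJK (-1) 0 (-1)

lemma quatBasis_repr (q : HR) : ⇑(quatBasis.repr q) = ![q.re, q.imI, q.imJ, q.imK] := rfl

lemma quatBasis_comp (j : Fin 4) :
    ![(quatBasis j).re, (quatBasis j).imI, (quatBasis j).imJ, (quatBasis j).imK] =
      Pi.single j 1 := by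
  rw [← quatBasis_repr, Module.Basis.repr_self, Finsupp.single_eq_pi_single]

lemma quatBasis_re (j : Fin 4) : (quatBasis j).re = Pi.single (M := fun _ => ℝ) j 1 0 :=
  congrFun (quatBasis_comp j) 0

lemma quatBasis_imI (j : Fin 4) : (quatBasis j).imI = Pi.single (M := fun _ => ℝ) j 1 1 :=
  congrFun (quatBasis_comp j) 1

lemma quatBasis_imJ (j : Fin 4) : (quatBasis j).imJ = Pi.single (M := fun _ => ℝ) j 1 2 :=
  congrFun (quatBasis_comp j) 2

lemma quatBasis_imK (j : Fin 4) : (quatBasis j).imK = Pi.single (M := fun _ => ℝ) j 1 3 :=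
  congrFun (quatBasis_comp j) 3

lemma norm_pow_four (q : HR) :
    ‖q‖ ^ 4 = (q.re ^ 2 + q.imI ^ 2 + q.imJ ^ 2 + q.imK ^ 2) ^ 2 := by
  rw [show ‖q‖ ^ 4 = (‖q‖ * ‖q‖) ^ 2 by ring, ← Quaternion.normSq_eq_norm_mul_self,
    Quaternion.normSq_def']

lemma det_mulLeft (q : HR) : LinearMap.det (LinearMap.mulLeft ℝ q) = ‖q‖ ^ 4 := by
  rw [norm_pow_four, ← LinearMap.det_toMatrix quatBasis]
  have h : LinearMap.toMatrix quatBasis quatBasis (LinearMap.mulLeft ℝ q) =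
      !![q.re, -q.imI, -q.imJ, -q.imK; q.imI, q.re, -q.imK, q.imJ;
         q.imJ, q.imK, q.re, -q.imI; q.imK, -q.imJ, q.imI, q.re] := by
    ext i j
    fin_cases i <;> fin_cases j <;>
      simp [LinearMap.toMatrix_apply, quatBasis_repr, quatBasis_re, quatBasis_imI,
        quatBasis_imJ, quatBasis_imK]
  rw [h]
  simp [Matrix.det_succ_row_zero, Fin.sum_univ_succ, Fin.succAbove]
  ring

lemma det_mulRight (q : HR) : LinearMap.det (LinearMap.mulRight ℝ q) = ‖q‖ ^ 4 := by
  rw [norm_pow_four, ← LinearMap.det_toMatrix quatBasis]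
  have h : LinearMap.toMatrix quatBasis quatBasis (LinearMap.mulRight ℝ q) =
      !![q.re, -q.imI, -q.imJ, -q.imK; q.imI, q.re, q.imK, -q.imJ;
         q.imJ, -q.imK, q.re, q.imI; q.imK, q.imJ, -q.imI, q.re] := by
    ext i j
    fin_cases i <;> fin_cases j <;>
      simp [LinearMap.toMatrix_apply, quatBasis_repr, quatBasis_re, quatBasis_imI,
        quatBasis_imJ, quatBasis_imK]
  rw [h]
  simp [Matrix.det_succ_row_zero, Fin.sum_univ_succ, Fin.succAbove]
  ring

/-- For nonzero `p, q` the map `x ↦ |pq|⁻¹ p x q` is a rotation of `ℍ`. -/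
lemma exists_rotation {p q : HR} (hp : p ≠ 0) (hq : q ≠ 0) :
    ∃ R : HR ≃ₗᵢ[ℝ] HR, LinearMap.det R.toLinearEquiv.toLinearMap = 1 ∧
      ∀ x, ‖p * q‖ • R x = p * x * q := by
  have hpn : ‖p‖ ≠ 0 := norm_ne_zero_iff.mpr hp
  have hqn : ‖q‖ ≠ 0 := norm_ne_zero_iff.mpr hq
  let T : HR →ₗ[ℝ] HR := ‖p * q‖⁻¹ • (LinearMap.mulRight ℝ q ∘ₗ LinearMap.mulLeft ℝ p)
  have hT : ∀ x, ‖T x‖ = ‖x‖ := fun x => by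
    simp only [T, LinearMap.smul_apply, LinearMap.comp_apply, LinearMap.mulLeft_apply,
      LinearMap.mulRight_apply, norm_smul, norm_mul, norm_inv, norm_norm]
    field_simp
  have hdet : LinearMap.det T = 1 := by
    rw [LinearMap.det_smul, LinearMap.det_comp, det_mulLeft, det_mulRight, norm_mul,
      Quaternion.finrank_eq_four]
    field_simp
  let R : HR ≃ₗᵢ[ℝ] HR := LinearIsometry.toLinearIsometryEquiv ⟨T, hT⟩ rfl
  refine ⟨R, ?_, fun x => ?_⟩
  · rw [show R.toLinearEquiv.toLinearMap = T from LinearMap.ext fun _ => rfl, hdet]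
  · change ‖p * q‖ • ‖p * q‖⁻¹ • (p * x * q) = _
    rw [smul_smul, mul_inv_cancel₀ (norm_ne_zero_iff.mpr (mul_ne_zero hp hq)), one_smul]

/-- for every nonzero icosian `p`, the set `p L p̃` is an SSL of `L`:
`p L p̃ ⊆ L` and `p L p̃ = |p p̃| · R(L)` for some rotation `R ∈ SO(4,ℝ)`. -/
theorem pLptwist_is_ssl (p : HR) (hp : p ≠ 0) (hpI : inIcosian p) :
    ((fun x => p * x * twist p) '' (Lsub : Set HR) ⊆ (Lsub : Set HR)) ∧
    ∃ R : HR ≃ₗᵢ[ℝ] HR, LinearMap.det R.toLinearEquiv.toLinearMap = 1 ∧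
      (fun x => p * x * twist p) '' (Lsub : Set HR) =
        (fun x => ‖p * twist p‖ • R x) '' (Lsub : Set HR) := by
  have hpK := hpI.inHK
  constructor
  · rintro _ ⟨x, hx, rfl⟩
    obtain ⟨hxI, hxt⟩ := mem_Lsub_iff.mp hx
    have hpx := icosian_mul hpI hxI
    refine mem_Lsub_iff.mpr ⟨icosian_mul hpx (twist_icosian hpI), ?_⟩
    change twist (p * x * twist p) = p * x * twist p
    rw [twist_mul hpx.inHK (inHK_twist hpK), twist_mul hpK hxI.inHK, twist_twist hpK, hxt,
      mul_assoc]
  · have ht : twist p ≠ 0 := fun h => hp <| by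
      rw [← twist_twist hpK, h]
      ext <;> simp [gal_zero]
    obtain ⟨R, hR, hRx⟩ := exists_rotation hp ht
    exact ⟨R, hR, by simp only [hRx]⟩
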